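/- Let k be a finite field, V a finite-dimensional symplectic k-vector space (dim ≥ 4), and k[V] the group algebra of (V,+). Let M be the set of elements Σ_{i∈P} X_i for P ranging over all planes of V, and N the subset where P ranges over non-isotropic planes only. Then the ideal of k[V] generated by M equals the ideal generated by N. -/

import Mathlib

/-!
Every plane sum lies in the ideal generated by the non-isotropic ones. Let `P` be spanned by `a` and
`b` with `ω a b = 0`, and choose `w` with `ω a w ≠ 0`. The planes `Q_t = ⟨a, w + t b⟩`, `t ∈ k`, are
non-isotropic; they are the planes other than `P` that contain `a` inside the 3-space
`W = ⟨a, b, w⟩`. They meet pairwise, and meet `P`, in the line `⟨a⟩`, and the complement of that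
line in each partitions `W` minus `P`. So, writing `[A]` for the sum of the `X_i`, `i ∈ A`, and
using `|k| = 0` in `k` to discard the `|k|` copies of `[⟨a⟩]`, `∑_t [Q_t] = [W] - [P]`. Since
`[W] = [⟨b⟩] [Q_0]`, this exhibits `[P]` as a combination of the `[Q_t]`
(`planeSum_eq_mul_sub_sum`). The nondegeneracy of `ω` provides `w`.
-/

/-- The sum of `X_i` over `i = x u + y v`, with `(x, y)` running over all pairs of scalars. It is the
sum over the plane spanned by `u` and `v` when these are linearly independent. -/
noncomputable def planeSum (k : Type*) {V : Type*} [Field k] [Fintype k] [AddCommGroup V]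
    [Module k V] (u v : V) : AddMonoidAlgebra k V :=
  ∑ x : k, ∑ y : k, AddMonoidAlgebra.single (x • u + y • v) (1 : k)

theorem finsum_span_pair {k V : Type*} [Field k] [Fintype k] [AddCommGroup V] [Module k V]
    {u v : V} (h : LinearIndependent k ![u, v]) :
    (∑ᶠ i ∈ ((Submodule.span k {u, v} : Submodule k V) : Set V),
      (AddMonoidAlgebra.single i (1 : k) : AddMonoidAlgebra k V)) = planeSum k u v := by
  have hr : ((Submodule.span k {u, v} : Submodule k V) : Set V)
      = Set.range (fun z : k × k => z.1 • u + z.2 • v) := by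
    ext z
    simp [Submodule.mem_span_pair]
  have hinj : Function.Injective (fun z : k × k => z.1 • u + z.2 • v) := by
    rintro ⟨x, y⟩ ⟨x', y'⟩ hz
    have hz' : x • u + y • v = x' • u + y' • v := hz
    have := LinearIndependent.pair_iff.1 h (x - x') (y - y') (by
      rw [sub_smul, sub_smul, sub_add_sub_comm, hz', sub_self])
    exact Prod.ext (sub_eq_zero.1 this.1) (sub_eq_zero.1 this.2)
  rw [hr, finsum_mem_range hinj, finsum_eq_sum_of_fintype, Fintype.sum_prod_type]
  rfl

theorem finrank_span_pair {k V : Type*} [Field k] [AddCommGroup V] [Module k V]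
    {u v : V} (h : LinearIndependent k ![u, v]) :
    Module.finrank k (Submodule.span k {u, v} : Submodule k V) = 2 := by
  have := finrank_span_eq_card h
  rwa [Matrix.range_cons_cons_empty, Fintype.card_fin] at this

theorem exists_basis_pair {k V : Type*} [Field k] [AddCommGroup V] [Module k V]
    (P : Submodule k V) (hP : Module.finrank k P = 2) :
    ∃ a b : V, LinearIndependent k ![a, b] ∧ P = Submodule.span k {a, b} := by
  have : FiniteDimensional k P := Module.finite_of_finrank_eq_succ hP
  let B := Module.finBasisOfFinrankEq k P hP
  have hli : LinearIndependent k ![(B 0 : V), (B 1 : V)] := by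
    have := B.linearIndependent.map' P.subtype P.ker_subtype
    have he : ![(B 0 : V), (B 1 : V)] = P.subtype ∘ B := by
      ext i
      fin_cases i <;> rfl
    rwa [he]
  refine ⟨B 0, B 1, hli, ?_⟩
  refine (Submodule.eq_of_le_of_finrank_eq ?_ ?_).symm
  · rw [Submodule.span_le]
    rintro z (rfl | rfl)
    · exact (B 0).2
    · exact (B 1).2
  · rw [finrank_span_pair hli, hP]

/-- The identity `[P] = [⟨b⟩] [Q_0] - ∑_t [Q_t]`. It is an identity of sums over coordinates and
needs no independence of `a`, `b`, `w`. -/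
theorem planeSum_eq_mul_sub_sum {k V : Type*} [Field k] [Fintype k] [AddCommGroup V] [Module k V]
    (a b w : V) :
    planeSum k a b =
      (∑ s : k, AddMonoidAlgebra.single (s • b) (1 : k)) * planeSum k a w
        - ∑ t : k, planeSum k a (w + t • b) := by
  classical
  -- The product is the sum over the 3-space, arranged by the coefficients of `a` and `w`.
  have h1 : (∑ s : k, AddMonoidAlgebra.single (s • b) (1 : k)) * planeSum k a w
      = ∑ x : k, ∑ y : k, ∑ s : k,
        (AddMonoidAlgebra.single (x • a + y • w + s • b) (1 : k) : AddMonoidAlgebra k V) := by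
    simp only [planeSum, Finset.mul_sum, Finset.sum_mul, AddMonoidAlgebra.single_mul_single, mul_one]
    refine Finset.sum_congr rfl fun x _ => Finset.sum_congr rfl fun y _ =>
      Finset.sum_congr rfl fun s _ => ?_
    rw [add_comm]
  have h2 : ∑ t : k, planeSum k a (w + t • b)
      = ∑ x : k, ∑ y : k, ∑ t : k,
        (AddMonoidAlgebra.single (x • a + y • w + (y * t) • b) (1 : k) :
          AddMonoidAlgebra k V) := by
    simp only [planeSum]
    rw [Finset.sum_comm]
    refine Finset.sum_congr rfl fun x _ => ?_
    rw [Finset.sum_comm]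
    refine Finset.sum_congr rfl fun y _ => Finset.sum_congr rfl fun t _ => ?_
    rw [smul_add, smul_smul, add_assoc]
  rw [h1, h2, ← Finset.sum_sub_distrib]
  unfold planeSum
  refine Finset.sum_congr rfl fun x _ => ?_
  rw [← Finset.sum_sub_distrib]
  -- Only the terms with `w`-coefficient `y = 0` survive.
  symm
  rw [Finset.sum_eq_single_of_mem (0 : k) (Finset.mem_univ _)]
  ·
    -- The subtracted sum is `|k|` copies of one basis element, hence zero, as `|k| = 0` in `k`.
    have hc : (Fintype.card k) • (AddMonoidAlgebra.single (x • a) (1 : k) : AddMonoidAlgebra k V)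
        = 0 := by
      rw [← Nat.cast_smul_eq_nsmul k, FiniteField.cast_card_eq_zero, zero_smul]
    simp [hc]
  ·
    -- For `y ≠ 0` the substitution `s = y t` permutes the scalars.
    intro y _ hy
    rw [sub_eq_zero]
    exact (Equiv.sum_comp (Equiv.mulLeft₀ y hy) (fun s : k =>
      (AddMonoidAlgebra.single (x • a + y • w + s • b) (1 : k) : AddMonoidAlgebra k V))).symm


/-- In the group algebra k[V] of a symplectic vector space V of even dimension
≥ 4 over a finite field, the ideal generated by the sums Σ_{i∈P} X_i over all
planes P equals the ideal generated by the sums over non-isotropic planes. -/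
theorem stmt10 (k V : Type*) [Field k] [Fintype k] [AddCommGroup V] [Module k V]
    [FiniteDimensional k V]
    (ω : V →ₗ[k] V →ₗ[k] k)
    (halt : ∀ v : V, ω v v = 0)
    (hnd : ∀ v : V, (∀ w : V, ω v w = 0) → v = 0)
    (heven : Even (Module.finrank k V)) (hdim : 4 ≤ Module.finrank k V) :
    Ideal.span {x : AddMonoidAlgebra k V | ∃ P : Submodule k V,
        Module.finrank k ↥P = 2 ∧
        x = ∑ᶠ i ∈ (P : Set V), (AddMonoidAlgebra.single i (1 : k) : AddMonoidAlgebra k V)} =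
    Ideal.span {x : AddMonoidAlgebra k V | ∃ P : Submodule k V,
        Module.finrank k ↥P = 2 ∧ (∃ u ∈ P, ∃ v ∈ P, ω u v ≠ 0) ∧
        x = ∑ᶠ i ∈ (P : Set V), (AddMonoidAlgebra.single i (1 : k) : AddMonoidAlgebra k V)} := by
  apply le_antisymm
  · rw [Ideal.span_le]
    rintro x ⟨P, hP, rfl⟩
    by_cases hiso : ∃ u ∈ P, ∃ v ∈ P, ω u v ≠ 0
    · exact Ideal.subset_span ⟨P, hP, hiso, rfl⟩
    push Not at hiso
    obtain ⟨a, b, hab, rfl⟩ := exists_basis_pair P hP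
    have ha0 : a ≠ 0 := hab.ne_zero 0
    have hωab : ω a b = 0 :=
      hiso a (Submodule.subset_span (by simp)) b (Submodule.subset_span (by simp))
    obtain ⟨w, hw⟩ : ∃ w, ω a w ≠ 0 := by
      by_contra! h
      exact ha0 (hnd a h)
    have key : ∀ v : V, ω a v ≠ 0 → planeSum k a v ∈
        Ideal.span {x : AddMonoidAlgebra k V | ∃ P : Submodule k V,
          Module.finrank k ↥P = 2 ∧ (∃ u ∈ P, ∃ v ∈ P, ω u v ≠ 0) ∧
          x = ∑ᶠ i ∈ (P : Set V),
            (AddMonoidAlgebra.single i (1 : k) : AddMonoidAlgebra k V)} := by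
      intro v hv
      have hli : LinearIndependent k ![a, v] := by
        rw [LinearIndependent.pair_iff]
        intro s t hst
        have ht : t = 0 := by
          have := congrArg (ω a) hst
          simpa [halt, hv] using this
        subst ht
        simpa [ha0] using hst
      exact Ideal.subset_span ⟨Submodule.span k {a, v}, finrank_span_pair hli,
        ⟨a, Submodule.subset_span (by simp), v, Submodule.subset_span (by simp), hv⟩,
        (finsum_span_pair hli).symm⟩
    rw [finsum_span_pair hab, planeSum_eq_mul_sub_sum a b w]
    refine Ideal.sub_mem _ (Ideal.mul_mem_left _ _ (key w hw)) (Ideal.sum_mem _ fun t _ => key _ ?_)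
    simpa [hωab] using hw
  · apply Ideal.span_mono
    rintro x ⟨P, hP, -, rfl⟩
    exact ⟨P, hP, rfl⟩
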